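/- Let g : ℂ² → ℂ² be differentiable over ℂ on all of ℂ². Suppose there exist four vectors v₁, v₂, v₃, v₄ ∈ ℂ², linearly independent over ℝ, and vectors w₁, w₂, w₃, w₄ ∈ ℂ² such that g(z + vⱼ) = g(z) + wⱼ for all z ∈ ℂ² and all j ∈ {1,2,3,4}. Then g is an affine transformation: for every z ∈ ℂ², g(z) = g(0) + (fderiv ℂ g 0)(z); in particular the derivative fderiv ℂ g z is the same continuous ℂ-linear map for every z. -/

import Mathlib

/-- A holomorphic self-map of ℂ² that is quasi-periodic with respect to a full
real lattice (sends lattice translates to translates) is an affine transformation. -/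
theorem entire_quasiperiodic_is_affine
    (g : ℂ × ℂ → ℂ × ℂ) (hg : Differentiable ℂ g)
    (v : Fin 4 → ℂ × ℂ) (hv : LinearIndependent ℝ v)
    (w : Fin 4 → ℂ × ℂ)
    (hper : ∀ (z : ℂ × ℂ) (j : Fin 4), g (z + v j) = g z + w j) :
    (∀ z : ℂ × ℂ, g z = g 0 + fderiv ℂ g 0 z) ∧
      (∀ z : ℂ × ℂ, fderiv ℂ g z = fderiv ℂ g 0) := by
  have hcard : Fintype.card (Fin 4) = Module.finrank ℝ (ℂ × ℂ) := by
    simp [Module.finrank_prod, Complex.finrank_real_complex]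
  let b := basisOfLinearIndependentOfCardEqFinrank hv hcard
  have hb : ∀ j, b j = v j := fun j => by simp [b]
  have key : ∀ h z : ℂ × ℂ, g (z + h) - g z = g h - g 0 := by
    intro h z
    have hd : Differentiable ℂ (fun z => g (z + h) - g z) := by fun_prop
    have hp : ∀ y ∈ Submodule.span ℤ (Set.range b), ∀ z,
        g (z + y + h) - g (z + y) = g (z + h) - g z := by
      intro y hy
      induction hy using Submodule.span_induction with
      | mem x hx =>
        obtain ⟨j, rfl⟩ := hx
        intro z
        rw [hb, add_right_comm, hper, hper]
        abel
      | zero => intro z; simp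
      | add x y _ _ hx hy =>
        intro z
        rw [← add_assoc, hy, hx]
      | smul n x _ hx =>
        induction n using Int.induction_on with
        | zero => intro z; simp
        | succ n ih =>
          intro z
          rw [add_smul, one_smul, ← add_assoc, hx, ih]
        | pred n ih =>
          intro z
          rw [← hx, sub_smul, one_smul, add_assoc z, sub_add_cancel, ih]
    have hbd : Bornology.IsBounded (Set.range (fun z => g (z + h) - g z)) := by
      have hK := isCompact_closedBall (0 : ℂ × ℂ) (∑ i, ‖b i‖)
      refine (hK.image hd.continuous).isBounded.subset ?_
      rintro _ ⟨z, rfl⟩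
      refine ⟨ZSpan.fract b z, by simpa using ZSpan.norm_fract_le b z, ?_⟩
      have := hp _ (ZSpan.floor b z).2 (ZSpan.fract b z)
      rw [ZSpan.fract_apply, sub_add_cancel] at this
      exact this.symm
    simpa using hd.apply_eq_apply_of_bounded hbd z 0
  have hfd : ∀ z : ℂ × ℂ, fderiv ℂ g z = fderiv ℂ g 0 := by
    intro z
    have h1 : (fun x => g (x + z)) = fun x => g x + (g z - g 0) := by
      funext x
      rw [← key z x]; abel
    have h2 := congrArg (fun f => fderiv ℂ f 0) h1
    simpa [fderiv_comp_add_right, fderiv_add_const] using h2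
  refine ⟨fun z => ?_, hfd⟩
  have hd : Differentiable ℂ (fun z => g z - fderiv ℂ g 0 z) := by fun_prop
  have := is_const_of_fderiv_eq_zero (𝕜 := ℂ) hd (fun x => by
    rw [fderiv_fun_sub (hg x) (fderiv ℂ g 0).differentiableAt, hfd x]; simp) z 0
  simp only [map_zero, sub_zero] at this
  rw [← this]; abel
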